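/- Assume m ≥ 2 and let Û₁ : H → H × H be the bounded linear map Û₁ b = (W₁ b + λ₁ b, η₁ b). Then for every n ∈ {1, …, m−1}, the operator norm of U_n ∘ ⋯ ∘ U_2 ∘ Û₁ equals √( sup_{p ∈ ℕ} (β_{1,n,p} + β̃_{1,n,p})² + η_{1,n}² ); moreover, with Ū_m : H × H → H defined by Ū_m(x, b) = W_m x + λ_m b, the operator norm of Ū_m ∘ U_{m−1} ∘ ⋯ ∘ U_2 ∘ Û₁ equals √( sup_{p ∈ ℕ} (β_{1,m,p} + β̃_{1,m,p})² ). -/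

import Mathlib

/-!
The chain `Uₙ ∘ ⋯ ∘ U₂ ∘ Û₁` sends `b` to `(T b, η_{1,n} b)`, where `T` is again diagonal in the
basis `v`, with eigenvalues `γ_p = β_{1,n,p} + β̃_{1,n,p}` (`chain_eq`). The eigenvalues obey the
recursion `γ^{(n+1)} = β^{(n+1)} γ^{(n)} + λ_{n+1} η_{1,n}` (`gamma_succ`), which is exactly the
effect of one more `U`, or of `Ū_m`. By Parseval,
`‖T b‖² + c² ‖b‖² = ∑ (γ_p² + c²) ⟪v p, b⟫²`, so an operator with this squared norm at every `b` has
operator norm `√(sup_p (γ_p² + c²))`, the lower bound being read off at the basis vectors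
(`norm_eq_of_diag`). The two claims are the cases `c = η_{1,n}` and `c = 0`.
-/

noncomputable section

open Finset

variable {H : Type*} [NormedAddCommGroup H] [InnerProductSpace ℝ H]

/-- Build the pair `(x, b)` in the `ℓ²` product space `H × H`. -/
def mkP (x b : H) : WithLp 2 (H × H) := (WithLp.equiv 2 (H × H)).symm (x, b)

/-- First component of an element of the product space. -/
def fstP (z : WithLp 2 (H × H)) : H := (WithLp.equiv 2 (H × H) z).1

/-- Second component of an element of the product space. -/
def sndP (z : WithLp 2 (H × H)) : H := (WithLp.equiv 2 (H × H) z).2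

/-- `(x, b) ↦ x` as a continuous linear map on the `ℓ²` product. -/
def fstL : WithLp 2 (H × H) →L[ℝ] H :=
  (ContinuousLinearMap.fst ℝ H H).comp
    (WithLp.prodContinuousLinearEquiv 2 ℝ H H).toContinuousLinearMap

/-- `(x, b) ↦ b` as a continuous linear map on the `ℓ²` product. -/
def sndL : WithLp 2 (H × H) →L[ℝ] H :=
  (ContinuousLinearMap.snd ℝ H H).comp
    (WithLp.prodContinuousLinearEquiv 2 ℝ H H).toContinuousLinearMap

/-- `Uₙ(x, b) = (Wₙ x + λₙ b, ηₙ b)` as a continuous linear map on the product space. -/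
def Uop (W : ℕ → H →L[ℝ] H) (lam eta : ℕ → ℝ) (n : ℕ) :
    WithLp 2 (H × H) →L[ℝ] WithLp 2 (H × H) :=
  ((WithLp.prodContinuousLinearEquiv 2 ℝ H H).symm.toContinuousLinearMap).comp
    (((((W n).comp (ContinuousLinearMap.fst ℝ H H)) + lam n • (ContinuousLinearMap.snd ℝ H H)).prod
        (eta n • (ContinuousLinearMap.snd ℝ H H))).comp
      (WithLp.prodContinuousLinearEquiv 2 ℝ H H).toContinuousLinearMap)

/-- Composition `Aₙ ∘ ⋯ ∘ Aᵢ` (the identity when `n < i`, i.e. when the composition is empty). -/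
def opComp {E : Type*} [NormedAddCommGroup E] [NormedSpace ℝ E]
    (A : ℕ → E →L[ℝ] E) (i : ℕ) : ℕ → (E →L[ℝ] E)
  | 0 => 1
  | n + 1 => if n + 1 < i then 1 else (A (n + 1)).comp (opComp A i n)

/-- `η_{i,j} = η_j ⋯ η_i` if `j ≥ i`, and `1` otherwise. -/
def etaP (eta : ℕ → ℝ) (i j : ℕ) : ℝ := ∏ k ∈ Finset.Icc i j, eta k

/-- `β_{i,n,p} = ∏_{j=i}^n β_p^{(j)}`. -/
def betaC (beta : ℕ → ℕ → ℝ) (i n p : ℕ) : ℝ := ∏ j ∈ Finset.Icc i n, beta j p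

/-- `β̃_{i,n,p} = Σ_{j=i}^{n−1} (∏_{l=j+1}^n β_p^{(l)}) λ_j η_{i,j−1} + λ_n η_{i,n−1}`. -/
def betaT (beta : ℕ → ℕ → ℝ) (lam eta : ℕ → ℝ) (i n p : ℕ) : ℝ :=
  (∑ j ∈ Finset.Icc i (n - 1), (∏ l ∈ Finset.Icc (j + 1) n, beta l p) * lam j * etaP eta i (j - 1))
    + lam n * etaP eta i (n - 1)

/-- The operator `W̃_{i,n} = Σ_{j=i}^{n−1} λ_j η_{i,j−1} (Wₙ ∘ ⋯ ∘ W_{j+1}) + λ_n η_{i,n−1} Id`. -/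
def Wt (W : ℕ → H →L[ℝ] H) (lam eta : ℕ → ℝ) (i n : ℕ) : H →L[ℝ] H :=
  (∑ j ∈ Finset.Icc i (n - 1), (lam j * etaP eta i (j - 1)) • opComp W (j + 1) n)
    + (lam n * etaP eta i (n - 1)) • (1 : H →L[ℝ] H)

/-- `a_{i,n}`. -/
def aC (beta : ℕ → ℕ → ℝ) (lam eta : ℕ → ℝ) (i n : ℕ) : ℝ :=
  (1 / 2) * ⨆ p : ℕ,
    (betaC beta i n p ^ 2 + betaT beta lam eta i n p ^ 2 + etaP eta i n ^ 2
      + Real.sqrt ((betaC beta i n p ^ 2 + betaT beta lam eta i n p ^ 2 + etaP eta i n ^ 2) ^ 2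
          - 4 * betaC beta i n p ^ 2 * etaP eta i n ^ 2))

/-- `ā_{i,n} = sup_p (β_{i,n,p}² + β̃_{i,n,p}²)`. -/
def aBar (beta : ℕ → ℕ → ℝ) (lam eta : ℕ → ℝ) (i n : ℕ) : ℝ :=
  ⨆ p : ℕ, (betaC beta i n p ^ 2 + betaT beta lam eta i n p ^ 2)

/-- `Qₙ(x, b) = (Rₙ x, b)`. -/
def Qop (R : ℕ → H → H) (n : ℕ) (z : WithLp 2 (H × H)) : WithLp 2 (H × H) :=
  mkP (R n (fstP z)) (sndP z)

/-- The virtual network `Qₙ ∘ Uₙ ∘ ⋯ ∘ Q₁ ∘ U₁`. -/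
def net (U : ℕ → WithLp 2 (H × H) →L[ℝ] WithLp 2 (H × H))
    (Q : ℕ → WithLp 2 (H × H) → WithLp 2 (H × H)) :
    ℕ → (WithLp 2 (H × H) → WithLp 2 (H × H))
  | 0 => id
  | n + 1 => fun z => Q (n + 1) (U (n + 1) (net U Q n z))

/-- `Ū_m (x, b) = W_m x + λ_m b` as a continuous linear map to `H`. -/
def Ubar (W : ℕ → H →L[ℝ] H) (lam : ℕ → ℝ) (m : ℕ) : WithLp 2 (H × H) →L[ℝ] H :=
  ((W m).comp fstL) + lam m • sndL

/-- `Û₁ b = (λ₁ b, η₁ b)`. -/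
def Uhat1a (lam eta : ℕ → ℝ) : H →L[ℝ] WithLp 2 (H × H) :=
  ((WithLp.prodContinuousLinearEquiv 2 ℝ H H).symm.toContinuousLinearMap).comp
    ((lam 1 • (1 : H →L[ℝ] H)).prod (eta 1 • (1 : H →L[ℝ] H)))

/-- `Û₁ b = (W₁ b + λ₁ b, η₁ b)`. -/
def Uhat1b (W : ℕ → H →L[ℝ] H) (lam eta : ℕ → ℝ) : H →L[ℝ] WithLp 2 (H × H) :=
  ((WithLp.prodContinuousLinearEquiv 2 ℝ H H).symm.toContinuousLinearMap).comp
    ((W 1 + lam 1 • (1 : H →L[ℝ] H)).prod (eta 1 • (1 : H →L[ℝ] H)))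

/-- The chain `Qₙ ∘ Uₙ ∘ ⋯ ∘ Q₂ ∘ U₂ ∘ Q₁ ∘ Û₁` (for `n ≥ 1`), fed with an input in `H`. -/
def midNet (U : ℕ → WithLp 2 (H × H) →L[ℝ] WithLp 2 (H × H))
    (Q : ℕ → WithLp 2 (H × H) → WithLp 2 (H × H)) (U1 : H → WithLp 2 (H × H)) :
    ℕ → (H → WithLp 2 (H × H))
  | 0 => U1
  | 1 => fun b => Q 1 (U1 b)
  | n + 2 => fun b => Q (n + 2) (U (n + 2) (midNet U Q U1 (n + 1) b))

lemma inner_diag (v : HilbertBasis ℕ ℝ H) (T : H →L[ℝ] H) (g : ℕ → ℝ)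
    (hT : ∀ p, T (v p) = g p • v p) (b : H) (p : ℕ) :
    inner ℝ (v p) (T b) = g p * inner ℝ (v p) b := by
  have h1 := ((v.hasSum_repr b).mapL T).mapL (innerSL ℝ (v p))
  have h2 := hasSum_single (f := fun q => (innerSL ℝ (v p)) (T (v.repr b q • v q))) p (by
    intro q hq
    simp [hT, v.orthonormal.2 hq.symm])
  have h3 := h1.unique h2
  simpa [hT, inner_smul_right, v.repr_apply_apply, v.orthonormal.1 p, mul_comm] using h3

lemma hasSum_sq_inner (v : HilbertBasis ℕ ℝ H) (b : H) :
    HasSum (fun p => (inner ℝ (v p) b : ℝ) ^ 2) (‖b‖ ^ 2) := by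
  have h := v.hasSum_inner_mul_inner b b
  rw [real_inner_self_eq_norm_sq] at h
  refine h.congr_fun ?_
  intro p
  rw [real_inner_comm, sq]

/-- The operator norm of a map whose squared norm is that of a diagonal operator plus `c²` times
the identity. -/
lemma norm_eq_of_diag {F : Type*} [NormedAddCommGroup F] [NormedSpace ℝ F]
    (v : HilbertBasis ℕ ℝ H) (T : H →L[ℝ] H) (g : ℕ → ℝ)
    (hT : ∀ p, T (v p) = g p • v p) (c : ℝ) (A : H →L[ℝ] F)
    (hA : ∀ b, ‖A b‖ ^ 2 = ‖T b‖ ^ 2 + c ^ 2 * ‖b‖ ^ 2) :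
    ‖A‖ = Real.sqrt (⨆ p, (g p ^ 2 + c ^ 2)) := by
  have hle : ∀ p, g p ^ 2 + c ^ 2 ≤ ‖A‖ ^ 2 := by
    intro p
    have h1 := hA (v p)
    have h2 := A.le_opNorm (v p)
    rw [hT, norm_smul, v.orthonormal.1 p] at h1
    rw [v.orthonormal.1 p, mul_one] at h2
    have h3 : ‖A (v p)‖ ^ 2 ≤ ‖A‖ ^ 2 := by gcongr
    simp only [mul_one, one_pow, Real.norm_eq_abs, sq_abs] at h1
    linarith
  have hbdd : BddAbove (Set.range fun p => g p ^ 2 + c ^ 2) :=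
    ⟨‖A‖ ^ 2, by rintro _ ⟨p, rfl⟩; exact hle p⟩
  apply le_antisymm
  · refine A.opNorm_le_bound (Real.sqrt_nonneg _) fun b => ?_
    have hS : 0 ≤ ⨆ p, (g p ^ 2 + c ^ 2) := Real.iSup_nonneg fun p => by positivity
    have h1 := (hasSum_sq_inner v (T b)).add ((hasSum_sq_inner v b).mul_left (c ^ 2))
    have h2 := (hasSum_sq_inner v b).mul_left (⨆ p, (g p ^ 2 + c ^ 2))
    have h3 := hasSum_le (fun p => by
      rw [inner_diag v T g hT]
      have := mul_le_mul_of_nonneg_right (le_ciSup hbdd p) (sq_nonneg (inner ℝ (v p) b))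
      linarith) h1 h2
    rw [← hA] at h3
    refine (sq_le_sq₀ (norm_nonneg _) (by positivity)).1 ?_
    rw [mul_pow, Real.sq_sqrt hS]
    exact h3
  · exact Real.sqrt_le_iff.2 ⟨norm_nonneg _, ciSup_le hle⟩

lemma etaP_succ (eta : ℕ → ℝ) (n : ℕ) : etaP eta 1 (n + 1) = etaP eta 1 n * eta (n + 1) :=
  Finset.prod_Icc_succ_top (by omega) _

lemma gamma_one (beta : ℕ → ℕ → ℝ) (lam eta : ℕ → ℝ) (p : ℕ) :
    betaC beta 1 1 p + betaT beta lam eta 1 1 p = beta 1 p + lam 1 := by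
  simp [betaC, betaT, etaP]

lemma gamma_succ (beta : ℕ → ℕ → ℝ) (lam eta : ℕ → ℝ) (n p : ℕ) (hn : 1 ≤ n) :
    betaC beta 1 (n + 1) p + betaT beta lam eta 1 (n + 1) p
      = beta (n + 1) p * (betaC beta 1 n p + betaT beta lam eta 1 n p)
        + lam (n + 1) * etaP eta 1 n := by
  obtain ⟨k, rfl⟩ : ∃ k, n = k + 1 := ⟨n - 1, by omega⟩
  have hsum : ∑ j ∈ Icc 1 k,
        (∏ l ∈ Icc (j + 1) (k + 1 + 1), beta l p) * lam j * etaP eta 1 (j - 1)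
      = beta (k + 1 + 1) p * ∑ j ∈ Icc 1 k,
        (∏ l ∈ Icc (j + 1) (k + 1), beta l p) * lam j * etaP eta 1 (j - 1) := by
    rw [Finset.mul_sum]
    refine Finset.sum_congr rfl fun j hj => ?_
    rw [Finset.mem_Icc] at hj
    rw [Finset.prod_Icc_succ_top (by omega)]
    ring
  simp only [betaC, betaT, Nat.add_sub_cancel]
  rw [Finset.sum_Icc_succ_top (by omega), hsum, Finset.prod_Icc_succ_top (by omega)]
  simp
  ring

/-- The chain `Uₙ ∘ ⋯ ∘ U₂ ∘ Û₁` is `b ↦ (T b, η_{1,n} b)` with `T` diagonal. -/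
lemma chain_eq (m : ℕ) (v : HilbertBasis ℕ ℝ H)
    (W : ℕ → H →L[ℝ] H) (beta : ℕ → ℕ → ℝ) (lam eta : ℕ → ℝ)
    (hW : ∀ n, 1 ≤ n → n ≤ m → ∀ p : ℕ, W n (v p) = beta n p • v p) (n : ℕ) (hn : 1 ≤ n) :
    n ≤ m → ∃ T : H →L[ℝ] H,
      (∀ p, T (v p) = (betaC beta 1 n p + betaT beta lam eta 1 n p) • v p) ∧
      ∀ b, (opComp (Uop W lam eta) 2 n) (Uhat1b W lam eta b)
        = WithLp.toLp 2 (T b, etaP eta 1 n • b) := by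
  induction n, hn using Nat.le_induction with
  | base =>
    intro h
    refine ⟨W 1 + lam 1 • (1 : H →L[ℝ] H), fun p => ?_, fun b => ?_⟩
    · rw [gamma_one]
      simp [hW 1 le_rfl h, add_smul]
    · simp [opComp, Uhat1b, etaP]
  | succ n hn ih =>
    intro h
    obtain ⟨T, hT, hb⟩ := ih (by omega)
    refine ⟨(W (n + 1)).comp T + (lam (n + 1) * etaP eta 1 n) • (1 : H →L[ℝ] H),
      fun p => ?_, fun b => ?_⟩
    · rw [gamma_succ _ _ _ _ _ hn]
      simp only [add_apply, ContinuousLinearMap.comp_apply, hT, map_smul,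
        hW (n + 1) (by omega) h, smul_apply, one_apply_eq_self]
      module
    · rw [opComp, if_neg (by omega), ContinuousLinearMap.comp_apply, hb, etaP_succ]
      simp [Uop, smul_smul, mul_comm]

theorem statement14 (m : ℕ) (hm : 1 ≤ m) [CompleteSpace H]
    (v : HilbertBasis ℕ ℝ H)
    (W : ℕ → H →L[ℝ] H) (beta : ℕ → ℕ → ℝ) (lam eta : ℕ → ℝ)
    (hW : ∀ n, 1 ≤ n → n ≤ m → ∀ p : ℕ, W n (v p) = beta n p • v p)
    (hlam : ∀ n, 1 ≤ n → n ≤ m → 0 < lam n)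
    (heta : ∀ n, 1 ≤ n → n ≤ m → 0 < eta n)
    (hm2 : 2 ≤ m) :
    (∀ n, 1 ≤ n → n ≤ m - 1 →
      ‖(opComp (Uop W lam eta) 2 n).comp (Uhat1b W lam eta)‖
        = Real.sqrt (⨆ p : ℕ,
            ((betaC beta 1 n p + betaT beta lam eta 1 n p) ^ 2 + etaP eta 1 n ^ 2)))
    ∧ ‖(Ubar W lam m).comp ((opComp (Uop W lam eta) 2 (m - 1)).comp (Uhat1b W lam eta))‖
        = Real.sqrt (⨆ p : ℕ, (betaC beta 1 m p + betaT beta lam eta 1 m p) ^ 2) := by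
  refine ⟨fun n hn hnm => ?_, ?_⟩
  · obtain ⟨T, hT, hb⟩ := chain_eq m v W beta lam eta hW n hn (by omega)
    refine norm_eq_of_diag v T _ hT _ _ fun b => ?_
    rw [ContinuousLinearMap.comp_apply, hb, WithLp.prod_norm_sq_eq_of_L2]
    simp [norm_smul, mul_pow]
  · obtain ⟨k, rfl⟩ : ∃ k, m = k + 1 := ⟨m - 1, by omega⟩
    obtain ⟨T, hT, hb⟩ := chain_eq (k + 1) v W beta lam eta hW k (by omega) (by omega)
    have hA : ∀ b, ((Ubar W lam (k + 1)).comp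
        ((opComp (Uop W lam eta) 2 (k + 1 - 1)).comp (Uhat1b W lam eta))) b
        = W (k + 1) (T b) + (lam (k + 1) * etaP eta 1 k) • b := by
      intro b
      simp only [Nat.add_sub_cancel, ContinuousLinearMap.comp_apply, hb]
      simp [Ubar, fstL, sndL, smul_smul]
    set A := (Ubar W lam (k + 1)).comp
        ((opComp (Uop W lam eta) 2 (k + 1 - 1)).comp (Uhat1b W lam eta))
    have key := norm_eq_of_diag v A
        (fun p => betaC beta 1 (k + 1) p + betaT beta lam eta 1 (k + 1) p)
        (fun p => by
          rw [hA, hT, map_smul, hW (k + 1) (by omega) le_rfl, gamma_succ _ _ _ _ _ (by omega)]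
          module) 0 A (fun b => by simp)
    simpa using key
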